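/- arXiv:1810.03267 — 3 statements merged into one kernel-verified Lean document; each statement's English description precedes it below -/
import Mathlib

section
/- Let α ∈ (0,1), e_b ∈ [0,1], e_p ∈ [0,1] with |1/2 − e_p| ≤ √(α(1−α)), and set m₀₀ = α(1−e_b), m₃₃ = (1−α)(1−e_b), m₁₁ = (1−α)e_b, m₂₂ = α e_b (so m₀₀/m₃₃ = m₂₂/m₁₁ = α/(1−α)). Then the minimum of C(ρ(a,b)) over real numbers a, b with a + b = 1/2 − e_p, |a| ≤ √(m₀₀m₃₃), |b| ≤ √(m₁₁m₂₂) equals H(α) − H(1/2 + √((α−1/2)² + (1/2−e_p)²)), and it is attained at ā = (1−e_b)(1/2 − e_p) and b̄ = e_b(1/2 − e_p). -/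
/-!
The matrix `ρ(a,b)` is block diagonal for the parity splitting of the basis. With `p = 1 - e_b` and
`q = e_b`, write `a = p u`, `b = q v`. The even block is `p` times a qubit state with eigenvalues
`1/2 ± s(u)`, where `s(u) = √((α - 1/2)² + u²)`, and the odd block is `q` times one with eigenvalues
`1/2 ± s(v)`. For `η(x) = -x log x` one has `η(xy) = y η(x) + x η(y)`, so the weights `p, q` contribute
the same amount `H(e_b)` to `S(ρ^diag)` and `S(ρ)`, leaving (`relEntCoh_rhoGen`)

  `C(ρ(p u, q v)) = H(α) - (p H(1/2 + s(u)) + q H(1/2 + s(v)))`.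

The constraint fixes `p u + q v = 1/2 - e_p`. As `s` is convex and `H` is concave on `[0,1]` and
decreasing on `[1/2,1]`, the bracket is at most `H(1/2 + s(p u + q v))` (`binEnt_block_le`), with
equality when `u = v = 1/2 - e_p`.
-/

open Matrix Complex Kronecker
open scoped ComplexOrder

noncomputable section

/-- von Neumann entropy (base 2), via eigenvalues; junk value 0 if not Hermitian. -/
noncomputable def vnEntropy {n : Type*} [Fintype n] [DecidableEq n] (ρ : Matrix n n ℂ) : ℝ :=
  if h : ρ.IsHermitian then -∑ i, h.eigenvalues i * Real.logb 2 (h.eigenvalues i) else 0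

/-- The diagonal part of a matrix. -/
def diagPart {n : Type*} [Fintype n] [DecidableEq n] (ρ : Matrix n n ℂ) : Matrix n n ℂ :=
  Matrix.diagonal fun i => ρ i i

/-- Relative entropy of coherence in the computational basis. -/
noncomputable def relEntCoh {n : Type*} [Fintype n] [DecidableEq n] (ρ : Matrix n n ℂ) : ℝ :=
  vnEntropy (diagPart ρ) - vnEntropy ρ

/-- A density matrix: positive semidefinite with trace one. -/
def IsDensity {n : Type*} [Fintype n] [DecidableEq n] (ρ : Matrix n n ℂ) : Prop :=
  ρ.PosSemidef ∧ ρ.trace = 1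

/-- Two-qubit index type: the first component is qubit A, the second is qubit B. -/
abbrev Q2 := Fin 2 × Fin 2

/-- Z-parity projector Π⁺ = |00⟩⟨00| + |11⟩⟨11|. -/
def PiPlus : Matrix Q2 Q2 ℂ := Matrix.diagonal fun i => if i.1 = i.2 then 1 else 0

/-- Z-parity projector Π⁻ = |01⟩⟨01| + |10⟩⟨10|. -/
def PiMinus : Matrix Q2 Q2 ℂ := Matrix.diagonal fun i => if i.1 = i.2 then 0 else 1

/-- Partial dephasing channel Φ(ρ) = Π⁺ρΠ⁺ + Π⁻ρΠ⁻. -/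
def dephase (ρ : Matrix Q2 Q2 ℂ) : Matrix Q2 Q2 ℂ :=
  PiPlus * ρ * PiPlus + PiMinus * ρ * PiMinus

/-- Binary entropy (base 2). -/
noncomputable def binEnt (e : ℝ) : ℝ := -(e * Real.logb 2 e) - (1 - e) * Real.logb 2 (1 - e)

/-- X-basis projector Π_x⁻ = |+−⟩⟨+−| + |−+⟩⟨−+|, written entrywise. -/
def PiXMinus : Matrix Q2 Q2 ℂ :=
  Matrix.of fun i j => (1/4 : ℂ) *
    ((if i.1 = j.1 then 1 else -1) + (if i.2 = j.2 then 1 else -1))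

/-- phase i^a for a : Fin 2 -/
def yph : Fin 2 → ℂ := fun a => if a = 0 then 1 else Complex.I

/-- Y-basis projector Π_y⁻ = |+i,+i⟩⟨+i,+i| + |−i,−i⟩⟨−i,−i|, written entrywise. -/
def PiYMinus : Matrix Q2 Q2 ℂ :=
  Matrix.of fun i j => (1/4 : ℂ) *
    (yph i.1 * yph i.2 * star (yph j.1) * star (yph j.2)
      + star (yph i.1) * star (yph i.2) * yph j.1 * yph j.2)

/-- The matrix ρ(a,b): diagonal (m00,m11,m22,m33), entry a between |00⟩,|11⟩,
entry b between |01⟩,|10⟩, zeros elsewhere. -/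
def rhoGen (m00 m11 m22 m33 a b : ℝ) : Matrix Q2 Q2 ℂ :=
  Matrix.of fun i j =>
    if i = j then
      (if i = (0, 0) then (m00 : ℂ) else if i = (0, 1) then (m11 : ℂ)
        else if i = (1, 0) then (m22 : ℂ) else (m33 : ℂ))
    else if (i = ((0 : Fin 2), (0 : Fin 2)) ∧ j = (1, 1)) ∨ (i = (1, 1) ∧ j = (0, 0)) then (a : ℂ)
    else if (i = ((0 : Fin 2), (1 : Fin 2)) ∧ j = (1, 0)) ∨ (i = (1, 0) ∧ j = (0, 1)) then (b : ℂ)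
    else 0

/-- The Bell-diagonal state with weights p0,p1,p2,p3 on |Φ⁺⟩,|Φ⁻⟩,|Ψ⁺⟩,|Ψ⁻⟩. -/
def bellDiag (p0 p1 p2 p3 : ℝ) : Matrix Q2 Q2 ℂ :=
  rhoGen ((p0 + p1)/2) ((p2 + p3)/2) ((p2 + p3)/2) ((p0 + p1)/2) ((p0 - p1)/2) ((p2 - p3)/2)

/-- Partial trace over the first qubit (A). -/
def trA (M : Matrix Q2 Q2 ℂ) : Matrix (Fin 2) (Fin 2) ℂ :=
  Matrix.of fun j j' => ∑ i : Fin 2, M (i, j) (i, j')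

/-- Partial trace over the second qubit (B). -/
def trB (M : Matrix Q2 Q2 ℂ) : Matrix (Fin 2) (Fin 2) ℂ :=
  Matrix.of fun i i' => ∑ j : Fin 2, M (i, j) (i', j)

/-- Coherence-based key-rate functional K(ρ) = C(Φ(ρ)) − H(Tr(Π⁻ρ)). -/
noncomputable def keyRate (ρ : Matrix Q2 Q2 ℂ) : ℝ :=
  relEntCoh (dephase ρ) - binEnt ((PiMinus * ρ).trace.re)

/-- Outer product |ψ⟩⟨ψ|. -/
def outer (ψ : Q2 → ℂ) : Matrix Q2 Q2 ℂ := Matrix.of fun i j => ψ i * star (ψ j)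

/-- Basis-optimized key rate: supremum of K over all local basis changes. -/
noncomputable def Km (ρ : Matrix Q2 Q2 ℂ) : ℝ :=
  sSup {x : ℝ | ∃ U V : Matrix (Fin 2) (Fin 2) ℂ, U ∈ Matrix.unitaryGroup (Fin 2) ℂ ∧
    V ∈ Matrix.unitaryGroup (Fin 2) ℂ ∧ x = keyRate ((U ⊗ₖ V) * ρ * (U ⊗ₖ V)ᴴ)}


/-- The bijection of the two-qubit basis with two copies of `Fin 2` that groups the basis vectors
by parity: `|00⟩, |11⟩` on the left, `|01⟩, |10⟩` on the right. -/
def parityEquiv : Q2 ≃ Fin 2 ⊕ Fin 2 where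
  toFun p := if p.1 = p.2 then Sum.inl p.1 else Sum.inr p.1
  invFun := Sum.elim (fun i => (i, i)) (fun i => (i, 1 - i))
  left_inv := by decide
  right_inv := by decide

lemma rhoGen_charpoly (m00 m11 m22 m33 a b : ℝ) :
    (rhoGen m00 m11 m22 m33 a b).charpoly =
      (!![(m00 : ℂ), a; a, m33]).charpoly * (!![(m11 : ℂ), b; b, m22]).charpoly := by
  rw [← Matrix.charpoly_reindex parityEquiv, ← Matrix.charpoly_fromBlocks_zero₁₂ (M₂₁ := 0)]
  congr 1
  ext i j
  rcases i with i | i <;> rcases j with j | j <;> fin_cases i <;> fin_cases j <;>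
    simp [rhoGen, parityEquiv]

lemma rhoGen_isHermitian (m00 m11 m22 m33 a b : ℝ) :
    (rhoGen m00 m11 m22 m33 a b).IsHermitian := by
  ext ⟨i, i'⟩ ⟨j, j'⟩
  fin_cases i <;> fin_cases i' <;> fin_cases j <;> fin_cases j' <;> simp [rhoGen]

lemma charpoly_two_block {m n c l l' : ℝ} (hs : l + l' = m + n) (hp : l * l' = m * n - c ^ 2) :
    (!![(m : ℂ), c; c, n]).charpoly =
      (Polynomial.X - Polynomial.C (l : ℂ)) * (Polynomial.X - Polynomial.C (l' : ℂ)) := by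
  have hs' : (m : ℂ) + n = l + l' := by exact_mod_cast hs.symm
  have hp' : (m : ℂ) * n - c * c = l * l' := by
    rw [← pow_two]; exact_mod_cast hp.symm
  rw [Matrix.charpoly_fin_two, Matrix.trace_fin_two_of, Matrix.det_fin_two_of, hs', hp']
  simp only [Polynomial.C_add, Polynomial.C_mul]
  ring

/-- The entropy of `ρ(a,b)`, from any four reals having the trace and determinant of the two parity
blocks: these are then the eigenvalues. -/
lemma vnEntropy_rhoGen {m00 m11 m22 m33 a b l0 l1 l2 l3 : ℝ}
    (hs : l0 + l3 = m00 + m33) (hp : l0 * l3 = m00 * m33 - a ^ 2)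
    (hs' : l1 + l2 = m11 + m22) (hp' : l1 * l2 = m11 * m22 - b ^ 2) :
    vnEntropy (rhoGen m00 m11 m22 m33 a b) =
      (Real.negMulLog l0 + Real.negMulLog l3 + Real.negMulLog l1 + Real.negMulLog l2)
        / Real.log 2 := by
  have hH := rhoGen_isHermitian m00 m11 m22 m33 a b
  have hroots := hH.roots_charpoly_eq_eigenvalues
  have hc : (rhoGen m00 m11 m22 m33 a b).charpoly =
      (({(l0 : ℂ), (l3 : ℂ), (l1 : ℂ), (l2 : ℂ)} : Multiset ℂ).map
        fun z => Polynomial.X - Polynomial.C z).prod := by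
    rw [rhoGen_charpoly, charpoly_two_block hs hp, charpoly_two_block hs' hp']
    simp [mul_assoc]
  rw [hc, Polynomial.roots_multiset_prod_X_sub_C] at hroots
  have h := congrArg (fun s : Multiset ℂ => (s.map fun z => Real.negMulLog z.re).sum) hroots
  simp only [Multiset.map_map, Function.comp_def, Multiset.insert_eq_cons, Multiset.map_cons,
    Multiset.map_singleton, Multiset.sum_cons, Multiset.sum_singleton, Complex.ofReal_re] at h
  rw [vnEntropy, dif_pos hH, add_assoc, add_assoc, h, Finset.sum_map_val, Finset.sum_div, ← Finset.sum_neg_distrib]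
  refine Finset.sum_congr rfl fun i _ => ?_
  simp [Real.negMulLog, Real.logb]
  ring

lemma diagPart_rhoGen (m00 m11 m22 m33 a b : ℝ) :
    diagPart (rhoGen m00 m11 m22 m33 a b) = rhoGen m00 m11 m22 m33 0 0 := by
  ext ⟨i, i'⟩ ⟨j, j'⟩
  fin_cases i <;> fin_cases i' <;> fin_cases j <;> fin_cases j' <;> simp [rhoGen, diagPart]

lemma binEnt_eq (x : ℝ) : binEnt x = Real.binEntropy x / Real.log 2 := by
  rw [Real.binEntropy_eq_negMulLog_add_negMulLog_one_sub]
  simp [binEnt, Real.negMulLog, Real.logb]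
  ring

/-- The coherence splits over the two parity blocks: the block of weight `1 - e` (resp. `e`) is
that multiple of a qubit state with diagonal `(α, 1 - α)` and off-diagonal entry `u` (resp. `v`),
whose eigenvalues are `1/2 ± √((α - 1/2)² + u²)`. -/
lemma relEntCoh_rhoGen (α e u v : ℝ) :
    relEntCoh (rhoGen (α * (1 - e)) ((1 - α) * e) (α * e) ((1 - α) * (1 - e))
        ((1 - e) * u) (e * v)) =
      binEnt α - ((1 - e) * binEnt (1/2 + Real.sqrt ((α - 1/2)^2 + u^2))
        + e * binEnt (1/2 + Real.sqrt ((α - 1/2)^2 + v^2))) := by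
  have hu : Real.sqrt ((α - 1/2)^2 + u^2) ^ 2 = (α - 1/2)^2 + u^2 := Real.sq_sqrt (by positivity)
  have hv : Real.sqrt ((α - 1/2)^2 + v^2) ^ 2 = (α - 1/2)^2 + v^2 := Real.sq_sqrt (by positivity)
  set s := Real.sqrt ((α - 1/2)^2 + u^2)
  set t := Real.sqrt ((α - 1/2)^2 + v^2)
  rw [relEntCoh, diagPart_rhoGen,
    vnEntropy_rhoGen (l0 := (1 - e) * α) (l3 := (1 - e) * (1 - α)) (l1 := e * (1 - α))
      (l2 := e * α) (by ring) (by ring) (by ring) (by ring),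
    vnEntropy_rhoGen (l0 := (1 - e) * (1/2 + s)) (l3 := (1 - e) * (1 - (1/2 + s)))
      (l1 := e * (1/2 + t)) (l2 := e * (1 - (1/2 + t)))
      (by ring) (by linear_combination -(1 - e) ^ 2 * hu)
      (by ring) (by linear_combination -e ^ 2 * hv)]
  simp only [binEnt_eq, Real.binEntropy_eq_negMulLog_add_negMulLog_one_sub, Real.negMulLog_mul]
  ring

/-- Convexity of the Euclidean norm of `(d, ·)` along the second coordinate. -/
lemma sqrt_convex (d u v e : ℝ) (he0 : 0 ≤ e) (he1 : e ≤ 1) :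
    Real.sqrt (d^2 + ((1 - e) * u + e * v)^2) ≤
      (1 - e) * Real.sqrt (d^2 + u^2) + e * Real.sqrt (d^2 + v^2) := by
  have h1 : 0 ≤ 1 - e := by linarith
  have hu : Real.sqrt (d^2 + u^2) ^ 2 = d^2 + u^2 := Real.sq_sqrt (by positivity)
  have hv : Real.sqrt (d^2 + v^2) ^ 2 = d^2 + v^2 := Real.sq_sqrt (by positivity)
  have hc : d^2 + u * v ≤ Real.sqrt (d^2 + u^2) * Real.sqrt (d^2 + v^2) := by
    rw [← Real.sqrt_mul (by positivity)]
    exact Real.le_sqrt_of_sq_le (by nlinarith [mul_nonneg (sq_nonneg d) (sq_nonneg (u - v))])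
  apply Real.sqrt_le_iff.2 ⟨by positivity, ?_⟩
  linear_combination 2 * mul_le_mul_of_nonneg_left hc (mul_nonneg h1 he0)
    - (1 - e) ^ 2 * hu - e ^ 2 * hv

/-- Monotonicity and concavity of the binary entropy combined with `sqrt_convex`. -/
lemma binEnt_block_le (d u v e : ℝ) (he0 : 0 ≤ e) (he1 : e ≤ 1)
    (hu : d^2 + u^2 ≤ 1/4) (hv : d^2 + v^2 ≤ 1/4) :
    (1 - e) * binEnt (1/2 + Real.sqrt (d^2 + u^2)) + e * binEnt (1/2 + Real.sqrt (d^2 + v^2)) ≤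
      binEnt (1/2 + Real.sqrt (d^2 + ((1 - e) * u + e * v)^2)) := by
  have h1 : 0 ≤ 1 - e := by linarith
  have hs : Real.sqrt (d^2 + u^2) ≤ 1/2 := Real.sqrt_le_iff.2 ⟨by norm_num, by linarith⟩
  have ht : Real.sqrt (d^2 + v^2) ≤ 1/2 := Real.sqrt_le_iff.2 ⟨by norm_num, by linarith⟩
  have hs0 := Real.sqrt_nonneg (d^2 + u^2)
  have ht0 := Real.sqrt_nonneg (d^2 + v^2)
  have hw0 := Real.sqrt_nonneg (d^2 + ((1 - e) * u + e * v)^2)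
  have hw := sqrt_convex d u v e he0 he1
  generalize Real.sqrt (d^2 + u^2) = s at *
  generalize Real.sqrt (d^2 + v^2) = t at *
  generalize Real.sqrt (d^2 + ((1 - e) * u + e * v)^2) = w at *
  have hst : (1 - e) * s + e * t ≤ 1/2 := by nlinarith
  have hconc := Real.strictConcave_binEntropy.concaveOn.2
    (x := 1/2 + s) (y := 1/2 + t) ⟨by linarith, by linarith⟩ ⟨by linarith, by linarith⟩
    h1 he0 (by ring)
  have hanti := Real.binEntropy_strictAntiOn.antitoneOn
    (a := 1/2 + w) (b := 1/2 + ((1 - e) * s + e * t))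
    ⟨by norm_num; linarith, by linarith⟩ ⟨by norm_num; linarith, by linarith⟩ (by linarith)
  simp only [smul_eq_mul] at hconc
  rw [show (1 - e) * (1/2 + s) + e * (1/2 + t) = 1/2 + ((1 - e) * s + e * t) by ring] at hconc
  simp only [binEnt_eq, ← mul_div_assoc, ← add_div]
  have hlog : 0 < Real.log 2 := Real.log_pos (by norm_num)
  gcongr
  exact hconc.trans hanti

/-- A feasible off-diagonal entry of a block of weight `p` is `p` times a feasible off-diagonal
entry of a normalized block; this also covers `p = 0`. -/
lemma exists_slope {p K a : ℝ} (hp : 0 ≤ p) (hK : 0 ≤ K) (ha : |a| ≤ p * K) :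
    ∃ u, a = p * u ∧ |u| ≤ K := by
  rcases hp.eq_or_lt with rfl | hp
  · exact ⟨0, by simpa using ha, by simpa using hK⟩
  · refine ⟨a / p, by field_simp, ?_⟩
    rw [abs_div, abs_of_pos hp, div_le_iff₀ hp]
    linarith

/-- analytic solution of the coherence minimization in the symmetric
case m₀₀/m₃₃ = m₂₂/m₁₁ = α/(1−α). -/
theorem stmt_11 (α eb ep : ℝ) (hα0 : 0 < α) (hα1 : α < 1)
    (heb0 : 0 ≤ eb) (heb1 : eb ≤ 1) (hep0 : 0 ≤ ep) (hep1 : ep ≤ 1)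
    (hcons : |1/2 - ep| ≤ Real.sqrt (α * (1 - α))) :
    IsLeast {x : ℝ | ∃ a b : ℝ, a + b = 1/2 - ep ∧
        |a| ≤ Real.sqrt ((α * (1 - eb)) * ((1 - α) * (1 - eb))) ∧
        |b| ≤ Real.sqrt (((1 - α) * eb) * (α * eb)) ∧
        x = relEntCoh (rhoGen (α * (1 - eb)) ((1 - α) * eb) (α * eb) ((1 - α) * (1 - eb)) a b)}
      (binEnt α - binEnt (1/2 + Real.sqrt ((α - 1/2)^2 + (1/2 - ep)^2))) ∧
    relEntCoh (rhoGen (α * (1 - eb)) ((1 - α) * eb) (α * eb) ((1 - α) * (1 - eb))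
        ((1 - eb) * (1/2 - ep)) (eb * (1/2 - ep)))
      = binEnt α - binEnt (1/2 + Real.sqrt ((α - 1/2)^2 + (1/2 - ep)^2)) := by
  have h1 : 0 ≤ 1 - eb := by linarith
  have hval : relEntCoh (rhoGen (α * (1 - eb)) ((1 - α) * eb) (α * eb) ((1 - α) * (1 - eb))
        ((1 - eb) * (1/2 - ep)) (eb * (1/2 - ep)))
      = binEnt α - binEnt (1/2 + Real.sqrt ((α - 1/2)^2 + (1/2 - ep)^2)) := by
    rw [relEntCoh_rhoGen]; ring
  have hA : Real.sqrt ((α * (1 - eb)) * ((1 - α) * (1 - eb))) =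
      (1 - eb) * Real.sqrt (α * (1 - α)) := by
    rw [show (α * (1 - eb)) * ((1 - α) * (1 - eb)) = (1 - eb) ^ 2 * (α * (1 - α)) by ring,
      Real.sqrt_mul (sq_nonneg _), Real.sqrt_sq h1]
  have hB : Real.sqrt (((1 - α) * eb) * (α * eb)) = eb * Real.sqrt (α * (1 - α)) := by
    rw [show ((1 - α) * eb) * (α * eb) = eb ^ 2 * (α * (1 - α)) by ring,
      Real.sqrt_mul (sq_nonneg _), Real.sqrt_sq heb0]
  -- `(α - 1/2)² + α (1 - α) = 1/4`, so feasibility keeps the eigenvalues of the normalized blocks in `[0, 1]`.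
  have hball : ∀ u : ℝ, |u| ≤ Real.sqrt (α * (1 - α)) → (α - 1/2)^2 + u^2 ≤ 1/4 := by
    intro u hu
    have := (Real.le_sqrt (abs_nonneg u) (mul_nonneg hα0.le (by linarith))).1 hu
    rw [sq_abs] at this
    nlinarith
  refine ⟨⟨⟨(1 - eb) * (1/2 - ep), eb * (1/2 - ep), by ring, ?_, ?_, hval.symm⟩, ?_⟩, hval⟩
  · rw [hA, abs_mul, abs_of_nonneg h1]
    gcongr
  · rw [hB, abs_mul, abs_of_nonneg heb0]
    gcongr
  · rintro x ⟨a, b, hab, ha, hb, rfl⟩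
    rw [hA] at ha
    rw [hB] at hb
    obtain ⟨u, rfl, hu⟩ := exists_slope h1 (Real.sqrt_nonneg _) ha
    obtain ⟨v, rfl, hv⟩ := exists_slope heb0 (Real.sqrt_nonneg _) hb
    rw [relEntCoh_rhoGen, ← hab]
    linarith [binEnt_block_le (α - 1/2) u v eb heb0 heb1 (hball u hu) (hball v hv)]

end
end

section
/- Let 0 ≤ γ ≤ 1/4 and define g(x) = 1/2 + √(γ + x²). Then for all x₁, x₂ ∈ [0, √(1/4 − γ)] and p ∈ [0,1], the function H∘g is concave: p·H(g(x₁)) + (1−p)·H(g(x₂)) ≤ H(g(p·x₁ + (1−p)·x₂)), where H is the binary entropy. -/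
/-!
The map `g x = 1/2 + √(γ + x²)` is convex (it is a Euclidean norm along a line), while the binary
entropy is concave on `[0, 1]` and decreasing on `[1/2, 1]`, where `g` takes its values. A concave
decreasing function of a convex function is concave.
-/

open Matrix Complex Kronecker
open scoped ComplexOrder

noncomputable section

/-- `binEnt` is Mathlib's natural-logarithm binary entropy rescaled to base two. -/
lemma binEnt_eq_binEntropy_div (e : ℝ) : binEnt e = Real.binEntropy e / Real.log 2 := by
  simp only [binEnt, Real.logb, Real.binEntropy, Real.log_inv]
  ring

/-- Convexity of `x ↦ √(γ + x²)`; after squaring both sides it is Cauchy–Schwarz for the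
vectors `(√γ, x)` and `(√γ, y)`. -/
lemma sqrt_add_sq_convex {γ : ℝ} (hγ : 0 ≤ γ) (x y : ℝ) {p : ℝ} (hp0 : 0 ≤ p) (hp1 : p ≤ 1) :
    Real.sqrt (γ + (p * x + (1 - p) * y) ^ 2) ≤
      p * Real.sqrt (γ + x ^ 2) + (1 - p) * Real.sqrt (γ + y ^ 2) := by
  have hq : 0 ≤ 1 - p := sub_nonneg.2 hp1
  have hx : 0 ≤ γ + x ^ 2 := by positivity
  have hy : 0 ≤ γ + y ^ 2 := by positivity
  have cauchy : γ + x * y ≤ Real.sqrt (γ + x ^ 2) * Real.sqrt (γ + y ^ 2) := by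
    rw [← Real.sqrt_mul hx]
    apply Real.le_sqrt_of_sq_le
    nlinarith [mul_nonneg hγ (sq_nonneg (x - y))]
  apply Real.sqrt_le_iff.2 ⟨by positivity, ?_⟩
  have hx2 := Real.sq_sqrt hx
  have hy2 := Real.sq_sqrt hy
  have hcross := mul_le_mul_of_nonneg_left cauchy (mul_nonneg hp0 hq)
  calc γ + (p * x + (1 - p) * y) ^ 2
      = p ^ 2 * (γ + x ^ 2) + (1 - p) ^ 2 * (γ + y ^ 2)
          + 2 * (p * (1 - p) * (γ + x * y)) := by ring
    _ ≤ p ^ 2 * (γ + x ^ 2) + (1 - p) ^ 2 * (γ + y ^ 2)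
          + 2 * (p * (1 - p) * (Real.sqrt (γ + x ^ 2) * Real.sqrt (γ + y ^ 2))) := by linarith
    _ = (p * Real.sqrt (γ + x ^ 2) + (1 - p) * Real.sqrt (γ + y ^ 2)) ^ 2 := by
        rw [← hx2, ← hy2]
        simp only [Real.sqrt_sq (Real.sqrt_nonneg _)]
        ring

lemma sqrt_add_sq_le_half {γ x : ℝ} (hγ : γ ≤ 1 / 4)
    (hx : x ∈ Set.Icc (0 : ℝ) (Real.sqrt (1 / 4 - γ))) : Real.sqrt (γ + x ^ 2) ≤ 1 / 2 := by
  have h := (Real.le_sqrt hx.1 (sub_nonneg.2 hγ)).1 hx.2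
  exact Real.sqrt_le_iff.2 ⟨by norm_num, by linarith⟩

/-- concavity of H ∘ g with g(x) = 1/2 + √(γ + x²). -/
theorem stmt_12 (γ : ℝ) (hγ0 : 0 ≤ γ) (hγ1 : γ ≤ 1/4) (x₁ x₂ p : ℝ)
    (hx₁ : x₁ ∈ Set.Icc (0:ℝ) (Real.sqrt (1/4 - γ)))
    (hx₂ : x₂ ∈ Set.Icc (0:ℝ) (Real.sqrt (1/4 - γ)))
    (hp : p ∈ Set.Icc (0:ℝ) 1) :
    p * binEnt (1/2 + Real.sqrt (γ + x₁^2)) + (1 - p) * binEnt (1/2 + Real.sqrt (γ + x₂^2)) ≤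
      binEnt (1/2 + Real.sqrt (γ + (p * x₁ + (1 - p) * x₂)^2)) := by
  obtain ⟨hp0, hp1⟩ := hp
  have hq : 0 ≤ 1 - p := sub_nonneg.2 hp1
  have h1 := sqrt_add_sq_le_half hγ1 hx₁
  have h2 := sqrt_add_sq_le_half hγ1 hx₂
  have hconv := sqrt_add_sq_convex hγ0 x₁ x₂ hp0 hp1
  have n1 := Real.sqrt_nonneg (γ + x₁ ^ 2)
  have n2 := Real.sqrt_nonneg (γ + x₂ ^ 2)
  have n3 := Real.sqrt_nonneg (γ + (p * x₁ + (1 - p) * x₂) ^ 2)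
  set a := Real.sqrt (γ + x₁ ^ 2)
  set b := Real.sqrt (γ + x₂ ^ 2)
  set c := Real.sqrt (γ + (p * x₁ + (1 - p) * x₂) ^ 2)
  have hmix : p * a + (1 - p) * b ≤ 1 / 2 := by
    linarith [mul_le_mul_of_nonneg_left h1 hp0, mul_le_mul_of_nonneg_left h2 hq]
  have hconc := Real.strictConcave_binEntropy.concaveOn.2
    (show 1 / 2 + a ∈ Set.Icc (0 : ℝ) 1 from ⟨by linarith, by linarith⟩)
    (show 1 / 2 + b ∈ Set.Icc (0 : ℝ) 1 from ⟨by linarith, by linarith⟩)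
    hp0 hq (by ring)
  have hanti := Real.binEntropy_strictAntiOn.antitoneOn
    (show 1 / 2 + c ∈ Set.Icc (2⁻¹ : ℝ) 1 from ⟨by linarith, by linarith⟩)
    (show 1 / 2 + (p * a + (1 - p) * b) ∈ Set.Icc (2⁻¹ : ℝ) 1 from
      ⟨by linarith, by linarith⟩)
    (by linarith)
  simp only [smul_eq_mul] at hconc
  rw [show p * (1 / 2 + a) + (1 - p) * (1 / 2 + b) = 1 / 2 + (p * a + (1 - p) * b) by ring]
    at hconc
  simp only [binEnt_eq_binEntropy_div]
  rw [← mul_div_assoc, ← mul_div_assoc, ← add_div]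
  exact div_le_div_of_nonneg_right (hconc.trans hanti) (Real.log_nonneg (by norm_num))

end
end

section
/- Let |Ψ⟩ be a unit vector in ℂ² ⊗ ℂ² and Ψ = |Ψ⟩⟨Ψ|. Then the basis-optimized key rate of Ψ equals its entanglement entropy: K^m(Ψ) := sup over 2×2 unitaries U_A, U_B of K((U_A⊗U_B)Ψ(U_A⊗U_B)†) = S(Tr_B Ψ), where Tr_B is the partial trace over the second qubit. In particular, if |Ψ⟩ is a product state then K^m(Ψ) = 0. -/
/-!
Write the pure state as a coefficient matrix `M`, so that its reduced state is `M * Mᴴ`, a local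
basis change is `M ↦ U * M * Vᵀ`, and the measurement outcomes `(A, B)` in the computational basis
have the distribution `p i j = ‖M i j‖ ^ 2`. The dephased state has the nonzero spectrum `{1 - e, e}`
with `e` the probability of odd parity, hence `K = H(A B) - 2 H(A ⊕ B)` (`keyRate_outer`).

Upper bound. Since `H(A | B)` and `H(B | A)` are at most `H(A ⊕ B)`, the key rate is at most the
mutual information `I(A : B)`. This in turn is at most the entropy of `ρ = M * Mᴴ`
(`mutualInfo_le`), a case of Holevo's bound. To see it, let `r` be the diagonal of `ρ` and `q` a
positive probability vector. Then `ρ ≤ diag (r / q)`, and so `log ρ ≤ diag (log (r / q))` by operator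
monotonicity of the logarithm (`column_log_le`). Evaluating this on the `j`-th column of `M`, with `q`
tending to the conditional distribution of `A` given `B = j`, and summing over `j`, gives
`tr (ρ log ρ) ≤ -I(A : B)`.

Attainment. In the Schmidt basis `M` is diagonal, the parity is always even, and `H(A B)` is the
entropy of `ρ` (`Km_outer`). For a product state `M` is singular, so `ρ` has eigenvalues `0` and `1`.
-/

open Matrix Complex Kronecker
open scoped ComplexOrder

noncomputable section

/-! ### Entropies and the key rate in terms of amplitudes -/

lemma vnEntropy_eq_of_roots {n : Type*} [Fintype n] [DecidableEq n] {ρ : Matrix n n ℂ}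
    (h : ρ.IsHermitian) (s : Multiset ℝ)
    (hs : ρ.charpoly.roots = Multiset.map (fun x : ℝ => (x : ℂ)) s) :
    vnEntropy ρ = (s.map Real.negMulLog).sum / Real.log 2 := by
  have h1 : s = Multiset.map h.eigenvalues Finset.univ.val := by
    rw [h.roots_charpoly_eq_eigenvalues] at hs
    have := congrArg (Multiset.map Complex.re) hs
    simpa [Multiset.map_map, Function.comp_def] using this.symm
  rw [vnEntropy, dif_pos h, h1, Multiset.map_map]
  change _ = (∑ i, Real.negMulLog (h.eigenvalues i)) / Real.log 2
  rw [Finset.sum_div, ← Finset.sum_neg_distrib]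
  refine Finset.sum_congr rfl fun i _ => ?_
  simp only [Real.negMulLog, Real.logb]
  ring

lemma vnEntropy_diagonal {n : Type*} [Fintype n] [DecidableEq n] (d : n → ℝ) :
    vnEntropy (Matrix.diagonal fun i => (d i : ℂ)) =
      (∑ i, Real.negMulLog (d i)) / Real.log 2 := by
  have h : (Matrix.diagonal fun i => (d i : ℂ)).IsHermitian := by
    rw [Matrix.isHermitian_diagonal_iff]
    intro i
    simp [isSelfAdjoint_iff]
  rw [vnEntropy_eq_of_roots h (Multiset.map d Finset.univ.val), Multiset.map_map]
  · rfl
  · rw [Matrix.charpoly_diagonal, Polynomial.roots_prod]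
    · simp [Multiset.map_map]
    · simp [Finset.prod_ne_zero_iff, Polynomial.X_sub_C_ne_zero]

lemma vnEntropy_congr {n : Type*} [Fintype n] [DecidableEq n] {ρ σ : Matrix n n ℂ}
    (hρ : ρ.IsHermitian) (hσ : σ.IsHermitian) (h : ρ.charpoly = σ.charpoly) :
    vnEntropy ρ = vnEntropy σ := by
  have hs : σ.charpoly.roots = Multiset.map (fun x : ℝ => (x : ℂ))
      (Multiset.map hσ.eigenvalues Finset.univ.val) := by
    rw [hσ.roots_charpoly_eq_eigenvalues, Multiset.map_map]
    rfl
  rw [vnEntropy_eq_of_roots hσ _ hs, vnEntropy_eq_of_roots hρ _ (h ▸ hs)]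

lemma dephase_apply (ρ : Matrix Q2 Q2 ℂ) (i j : Q2) :
    dephase ρ i j = if (i.1 = i.2) ↔ (j.1 = j.2) then ρ i j else 0 := by
  simp only [dephase, PiPlus, PiMinus, Matrix.add_apply, Matrix.mul_diagonal, Matrix.diagonal_mul]
  by_cases hi : i.1 = i.2 <;> by_cases hj : j.1 = j.2 <;> simp [hi, hj]

/-- The dephased pure state is `N * Nᴴ`, where the two columns of `N` are the even and the odd parity
components of `ψ`. These are orthogonal, so the nonzero spectrum is that of the diagonal matrix
`Nᴴ * N`. -/
lemma vnEntropy_dephase_outer (ψ : Q2 → ℂ) :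
    vnEntropy (dephase (outer ψ)) =
      (Real.negMulLog (‖ψ (0, 0)‖ ^ 2 + ‖ψ (1, 1)‖ ^ 2)
        + Real.negMulLog (‖ψ (0, 1)‖ ^ 2 + ‖ψ (1, 0)‖ ^ 2)) / Real.log 2 := by
  set N : Matrix Q2 (Fin 2) ℂ :=
    Matrix.of fun i k => if (i.1 = i.2) ↔ k = 0 then ψ i else 0 with hN
  set d : Fin 2 → ℝ :=
    ![‖ψ (0, 0)‖ ^ 2 + ‖ψ (1, 1)‖ ^ 2, ‖ψ (0, 1)‖ ^ 2 + ‖ψ (1, 0)‖ ^ 2] with hd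
  have h1 : dephase (outer ψ) = N * Nᴴ := by
    ext ⟨i, i'⟩ ⟨j, j'⟩
    fin_cases i <;> fin_cases i' <;> fin_cases j <;> fin_cases j' <;>
      simp [dephase_apply, outer, hN, Matrix.mul_apply]
  have h2 : Nᴴ * N = Matrix.diagonal fun i => (d i : ℂ) := by
    ext i j
    fin_cases i <;> fin_cases j <;>
      simp [hN, hd, Matrix.mul_apply, Fintype.sum_prod_type, Complex.conj_mul']
  rw [vnEntropy_eq_of_roots (h1 ▸ Matrix.isHermitian_mul_conjTranspose_self N)
    (Multiset.replicate 2 0 + Multiset.map d Finset.univ.val)]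
  · simp [hd]
  · rw [h1, Matrix.charpoly_mul_comm_of_le _ _ (by simp), h2, Matrix.charpoly_diagonal,
      Polynomial.roots_mul, Polynomial.roots_prod]
    · simp [Multiset.nsmul_singleton]
    · simp [Polynomial.X_sub_C_ne_zero]
    · simp [Polynomial.X_sub_C_ne_zero]

/-- For a pure state the key rate is `H(A B) - 2 H(A ⊕ B)`, where `(A, B)` are the outcomes of the
computational basis measurement. -/
lemma keyRate_outer (ψ : Q2 → ℂ) (hψ : ∑ i, ‖ψ i‖ ^ 2 = 1) :
    keyRate (outer ψ) = (∑ i, Real.negMulLog (‖ψ i‖ ^ 2)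
      - 2 * (Real.negMulLog (‖ψ (0, 0)‖ ^ 2 + ‖ψ (1, 1)‖ ^ 2)
        + Real.negMulLog (‖ψ (0, 1)‖ ^ 2 + ‖ψ (1, 0)‖ ^ 2))) / Real.log 2 := by
  have h1 : diagPart (dephase (outer ψ)) = Matrix.diagonal fun i => ((‖ψ i‖ ^ 2 : ℝ) : ℂ) := by
    rw [diagPart]
    congr 1
    ext ⟨i, i'⟩
    simp [dephase_apply, outer, Complex.mul_conj']
  have h2 : (PiMinus * outer ψ).trace.re = ‖ψ (0, 1)‖ ^ 2 + ‖ψ (1, 0)‖ ^ 2 := by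
    simp [Matrix.trace, PiMinus, outer, Fintype.sum_prod_type, Complex.mul_conj']
    norm_cast
  have h3 : 1 - (‖ψ (0, 1)‖ ^ 2 + ‖ψ (1, 0)‖ ^ 2) = ‖ψ (0, 0)‖ ^ 2 + ‖ψ (1, 1)‖ ^ 2 := by
    simp [Fintype.sum_prod_type] at hψ
    linarith
  rw [keyRate, relEntCoh, h1, h2, vnEntropy_diagonal, vnEntropy_dephase_outer, binEnt, h3]
  simp only [Real.negMulLog, Real.logb]
  ring

lemma trB_outer (M : Matrix (Fin 2) (Fin 2) ℂ) :
    trB (outer fun i => M i.1 i.2) = M * Mᴴ := by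
  ext i j
  simp [trB, outer, Matrix.mul_apply]

lemma local_conj_outer (U V M : Matrix (Fin 2) (Fin 2) ℂ) :
    (U ⊗ₖ V) * outer (fun i => M i.1 i.2) * (U ⊗ₖ V)ᴴ =
      outer fun i => (U * M * Vᵀ) i.1 i.2 := by
  have h : ∀ (A : Matrix Q2 Q2 ℂ) (ψ : Q2 → ℂ), A * outer ψ * Aᴴ = outer (A *ᵥ ψ) := by
    intro A ψ
    ext i j
    simp [outer, Matrix.mul_apply, Matrix.mulVec, dotProduct, Finset.sum_mul, Finset.mul_sum]
    refine Finset.sum_congr rfl fun k _ => Finset.sum_congr rfl fun l _ => ?_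
    ring
  rw [h]
  congr 1
  ext ⟨i, j⟩
  simp [Matrix.mulVec, dotProduct, Matrix.mul_apply, Fintype.sum_prod_type]
  ring

/-! ### Classical and operator inequalities -/

/-- Subadditivity of the Shannon entropy for a `2 × 2` table of probabilities, by Gibbs' inequality
against the product of the marginals. -/
lemma negMulLog_subadditive {a b c d : ℝ} (ha : 0 ≤ a) (hb : 0 ≤ b) (hc : 0 ≤ c) (hd : 0 ≤ d)
    (h : a + b + c + d = 1) :
    Real.negMulLog a + Real.negMulLog b + Real.negMulLog c + Real.negMulLog d ≤
      Real.negMulLog (a + b) + Real.negMulLog (c + d)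
        + Real.negMulLog (a + c) + Real.negMulLog (b + d) := by
  have key : ∀ x r t : ℝ, 0 ≤ x → x ≤ r → x ≤ t →
      x - r * t ≤ x * Real.log x - x * Real.log r - x * Real.log t := by
    intro x r t hx hr ht
    rcases hx.eq_or_lt with rfl | hx
    · simp; positivity
    · have hr' : 0 < r := by linarith
      have ht' : 0 < t := by linarith
      have h1 := Real.log_le_sub_one_of_pos (x := r * t / x) (by positivity)
      rw [Real.log_div (by positivity) hx.ne', Real.log_mul hr'.ne' ht'.ne'] at h1
      have h2 := mul_le_mul_of_nonneg_left h1 hx.le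
      have h3 : x * (r * t / x - 1) = r * t - x := by field_simp
      linarith
  have h1 := key a (a + b) (a + c) ha (by linarith) (by linarith)
  have h2 := key b (a + b) (b + d) hb (by linarith) (by linarith)
  have h3 := key c (c + d) (a + c) hc (by linarith) (by linarith)
  have h4 := key d (c + d) (b + d) hd (by linarith) (by linarith)
  have h5 : (a + b) * (a + c) + (a + b) * (b + d) + (c + d) * (a + c) + (c + d) * (b + d) = 1 := by
    have : (a + b) * (a + c) + (a + b) * (b + d) + (c + d) * (a + c) + (c + d) * (b + d)
      = (a + b + c + d) ^ 2 := by ring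
    rw [this, h]; norm_num
  simp only [Real.negMulLog]
  linarith

open scoped MatrixOrder Matrix.Norms.L2Operator

lemma vnEntropy_eq_neg_trace (M : Matrix (Fin 2) (Fin 2) ℂ) :
    vnEntropy (M * Mᴴ) * Real.log 2 = -(Mᴴ * CFC.log (M * Mᴴ) * M).trace.re := by
  have h := Matrix.isHermitian_mul_conjTranspose_self M
  have h1 : (Mᴴ * CFC.log (M * Mᴴ) * M).trace = (cfc (fun x => x * Real.log x) (M * Mᴴ)).trace := by
    rw [Matrix.mul_assoc, Matrix.trace_mul_comm, Matrix.mul_assoc, Matrix.trace_mul_comm]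
    rw [h.cfc_eq, CFC.log, h.cfc_eq]
    conv_lhs =>
      enter [1, 1]
      rw [h.spectral_theorem]
    simp only [Matrix.IsHermitian.cfc]
    rw [← map_mul, Matrix.diagonal_mul_diagonal]
    congr 3
    ext i
    simp
  rw [h1, h.cfc_eq, Matrix.IsHermitian.cfc, Unitary.conjStarAlgAut_apply, Matrix.trace_mul_comm,
    ← mul_assoc, Unitary.coe_star_mul_self, one_mul, Matrix.trace_diagonal, vnEntropy, dif_pos h]
  have h2 : Real.log 2 ≠ 0 := by positivity
  simp only [Real.logb, Function.comp, Complex.re_sum, neg_mul, Finset.sum_mul]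
  congr 1
  refine Finset.sum_congr rfl fun i _ => ?_
  simp
  field_simp

/-- For a positive probability vector `q`, the diagonal matrix with entries `(M * Mᴴ) i i / q i`
dominates `M * Mᴴ`. In dimension two the difference is explicitly a Gram matrix `N * Nᴴ`. -/
lemma mul_conjTranspose_le_diagonal (M : Matrix (Fin 2) (Fin 2) ℂ) (q : Fin 2 → ℝ)
    (hq : ∀ i, 0 < q i) (hq1 : q 0 + q 1 = 1) :
    M * Mᴴ ≤ Matrix.diagonal fun i => (((‖M i 0‖ ^ 2 + ‖M i 1‖ ^ 2) / q i : ℝ) : ℂ) := by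
  rw [Matrix.le_iff]
  have h0 := hq 0
  have h1 := hq 1
  set N : Matrix (Fin 2) (Fin 2) ℂ := Matrix.of
    ![fun j => ((√(q 1 / q 0) : ℝ) : ℂ) * M 0 j, fun j => -((√(q 0 / q 1) : ℝ) : ℂ) * M 1 j] with hN
  have hs0 : ((√(q 1 / q 0) : ℝ) : ℂ) * ((√(q 1 / q 0) : ℝ) : ℂ) = q 1 / q 0 := by
    rw [← Complex.ofReal_mul, Real.mul_self_sqrt (by positivity)]; simp
  have hs1 : ((√(q 0 / q 1) : ℝ) : ℂ) * ((√(q 0 / q 1) : ℝ) : ℂ) = q 0 / q 1 := by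
    rw [← Complex.ofReal_mul, Real.mul_self_sqrt (by positivity)]; simp
  have hs : ((√(q 1 / q 0) : ℝ) : ℂ) * ((√(q 0 / q 1) : ℝ) : ℂ) = 1 := by
    rw [← Complex.ofReal_mul, ← Real.sqrt_mul (by positivity)]
    rw [div_mul_div_cancel₀ h0.ne', div_self h1.ne']; simp
  have hc0 : (q 0 : ℂ) ≠ 0 := by exact_mod_cast h0.ne'
  have hc1 : (q 1 : ℂ) ≠ 0 := by exact_mod_cast h1.ne'
  have hqc : (q 0 : ℂ) + q 1 = 1 := by exact_mod_cast hq1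
  have : (Matrix.diagonal fun i => (((‖M i 0‖ ^ 2 + ‖M i 1‖ ^ 2) / q i : ℝ) : ℂ)) - M * Mᴴ
      = N * Nᴴ := by
    ext i j
    fin_cases i <;> fin_cases j <;>
      simp only [Matrix.sub_apply, Matrix.mul_apply, Fin.sum_univ_two, hN] <;>
      simp [← Complex.mul_conj']
    · have : (M 0 0 * (starRingEnd ℂ) (M 0 0) + M 0 1 * (starRingEnd ℂ) (M 0 1)) / (q 0 : ℂ) =
        (M 0 0 * (starRingEnd ℂ) (M 0 0) + M 0 1 * (starRingEnd ℂ) (M 0 1)) * (1 + q 1 / q 0) := by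
        field_simp; rw [hqc, mul_one]
      rw [this, ← hs0]; ring
    · linear_combination (M 0 0 * (starRingEnd ℂ) (M 1 0) + M 0 1 * (starRingEnd ℂ) (M 1 1)) * hs
    · linear_combination (M 1 0 * (starRingEnd ℂ) (M 0 0) + M 1 1 * (starRingEnd ℂ) (M 0 1)) * hs
    · have : (M 1 0 * (starRingEnd ℂ) (M 1 0) + M 1 1 * (starRingEnd ℂ) (M 1 1)) / (q 1 : ℂ) =
        (M 1 0 * (starRingEnd ℂ) (M 1 0) + M 1 1 * (starRingEnd ℂ) (M 1 1)) * (1 + q 0 / q 1) := by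
        field_simp; rw [add_comm (q 1 : ℂ), hqc, mul_one]
      rw [this, ← hs1]; ring
  rw [this]
  exact Matrix.posSemidef_self_mul_conjTranspose N

lemma log_diagonal {d : Fin 2 → ℝ} (hd : ∀ i, 0 < d i) :
    CFC.log (Matrix.diagonal fun i => (d i : ℂ)) =
      Matrix.diagonal fun i => (Real.log (d i) : ℂ) := by
  have h : (Matrix.diagonal fun i => (d i : ℂ)) =
      NormedSpace.exp (Matrix.diagonal fun i => (Real.log (d i) : ℂ)) := by
    rw [Matrix.exp_diagonal]
    congr 1
    ext i
    rw [Pi.coe_exp, ← Complex.exp_eq_exp_ℂ, ← Complex.ofReal_exp, Real.exp_log (hd i)]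
  rw [h]
  refine CFC.log_exp _ ?_
  rw [isSelfAdjoint_iff, Matrix.star_eq_conjTranspose, Matrix.diagonal_conjTranspose]
  congr 1
  ext i
  simp

/-- Operator monotonicity of the logarithm applied to `mul_conjTranspose_le_diagonal`, evaluated on
the `j`-th column of `M`. -/
lemma column_log_le (M : Matrix (Fin 2) (Fin 2) ℂ) (hM : M.det ≠ 0)
    (hr : ∀ i, 0 < ‖M i 0‖ ^ 2 + ‖M i 1‖ ^ 2) (q : Fin 2 → ℝ)
    (hq : ∀ i, 0 < q i) (hq1 : q 0 + q 1 = 1) (j : Fin 2) :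
    ((Mᴴ * CFC.log (M * Mᴴ) * M) j j).re ≤
      ∑ i, ‖M i j‖ ^ 2 * Real.log ((‖M i 0‖ ^ 2 + ‖M i 1‖ ^ 2) / q i) := by
  have hpos : IsStrictlyPositive (M * Mᴴ) := by
    rw [Matrix.isStrictlyPositive_iff_posDef]
    refine Matrix.PosDef.mul_conjTranspose_self M ?_
    exact Matrix.vecMul_injective_of_isUnit ((Matrix.isUnit_iff_isUnit_det M).2 hM.isUnit)
  have h1 := CFC.log_le_log (mul_conjTranspose_le_diagonal M q hq hq1) hpos
  rw [log_diagonal fun i => div_pos (hr i) (hq i), Matrix.le_iff] at h1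
  have h2 := (h1.conjTranspose_mul_mul_same M).diag_nonneg (i := j)
  rw [Matrix.mul_sub, Matrix.sub_mul, Matrix.sub_apply] at h2
  have h3 := (Complex.le_def.mp h2).1
  have h4 : ((Mᴴ * (Matrix.diagonal fun i =>
      (Real.log ((‖M i 0‖ ^ 2 + ‖M i 1‖ ^ 2) / q i) : ℂ)) * M) j j)
      = ((∑ i, ‖M i j‖ ^ 2 * Real.log ((‖M i 0‖ ^ 2 + ‖M i 1‖ ^ 2) / q i) : ℝ) : ℂ) := by
    rw [Matrix.mul_apply]
    push_cast
    refine Finset.sum_congr rfl fun i _ => ?_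
    rw [Matrix.mul_diagonal, Matrix.conjTranspose_apply, ← Complex.conj_mul']
    simp only [RCLike.star_def]
    ring
  rw [Complex.sub_re, h4, Complex.ofReal_re, Complex.zero_re] at h3
  linarith

/-! ### The upper bound -/

lemma vnEntropy_nonneg (M : Matrix (Fin 2) (Fin 2) ℂ)
    (hM : ∑ i, ∑ j, ‖M i j‖ ^ 2 = 1) : 0 ≤ vnEntropy (M * Mᴴ) := by
  have h := Matrix.posSemidef_self_mul_conjTranspose M
  have htr : ∑ i, h.1.eigenvalues i = 1 := by
    have h1 := h.1.trace_eq_sum_eigenvalues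
    have h2 : (M * Mᴴ).trace = ((∑ i, ∑ j, ‖M i j‖ ^ 2 : ℝ) : ℂ) := by
      simp [Matrix.trace, Matrix.mul_apply, Complex.mul_conj']
    rw [h2, hM] at h1
    have h3 := congrArg Complex.re h1
    simpa using h3.symm
  rw [vnEntropy, dif_pos h.1, ← Finset.sum_neg_distrib]
  refine Finset.sum_nonneg fun i _ => ?_
  have h0 := h.eigenvalues_nonneg i
  have h1 : h.1.eigenvalues i ≤ 1 := by
    rw [← htr]
    exact Finset.single_le_sum (fun k _ => h.eigenvalues_nonneg k) (Finset.mem_univ i)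
  have h2 : Real.logb 2 (h.1.eigenvalues i) ≤ 0 := Real.logb_nonpos (by norm_num) h0 h1
  nlinarith

/-- Holevo-type bound: with `p i j = ‖M i j‖ ^ 2`, the mutual information of `p` is at most the
entropy of `M * Mᴴ`. It follows by summing `column_log_le` over the columns `j`, with `q` close to
the conditional distribution `p (· | j)`. That distribution may have zeros, so it is mixed with the
uniform one and the weight of the mixture is sent to zero. -/
lemma mutualInfo_le_of_det_ne_zero (M : Matrix (Fin 2) (Fin 2) ℂ)
    (hdet : M.det ≠ 0) :
    Real.negMulLog (‖M 0 0‖ ^ 2 + ‖M 0 1‖ ^ 2) + Real.negMulLog (‖M 1 0‖ ^ 2 + ‖M 1 1‖ ^ 2)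
      + Real.negMulLog (‖M 0 0‖ ^ 2 + ‖M 1 0‖ ^ 2) + Real.negMulLog (‖M 0 1‖ ^ 2 + ‖M 1 1‖ ^ 2)
      - ∑ i, ∑ j, Real.negMulLog (‖M i j‖ ^ 2) ≤ vnEntropy (M * Mᴴ) * Real.log 2 := by
  have hr : ∀ i, 0 < ‖M i 0‖ ^ 2 + ‖M i 1‖ ^ 2 := by
    intro i
    by_contra hcon
    have h0 : M i 0 = 0 := by
      rw [← norm_eq_zero, ← sq_eq_zero_iff]; nlinarith [sq_nonneg ‖M i 0‖, sq_nonneg ‖M i 1‖]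
    have h1 : M i 1 = 0 := by
      rw [← norm_eq_zero, ← sq_eq_zero_iff]; nlinarith [sq_nonneg ‖M i 0‖, sq_nonneg ‖M i 1‖]
    exact hdet (Matrix.det_eq_zero_of_row_eq_zero i fun j => by fin_cases j <;> assumption)
  have hs : ∀ j, 0 < ‖M 0 j‖ ^ 2 + ‖M 1 j‖ ^ 2 := by
    intro j
    by_contra hcon
    have h0 : M 0 j = 0 := by
      rw [← norm_eq_zero, ← sq_eq_zero_iff]; nlinarith [sq_nonneg ‖M 0 j‖, sq_nonneg ‖M 1 j‖]
    have h1 : M 1 j = 0 := by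
      rw [← norm_eq_zero, ← sq_eq_zero_iff]; nlinarith [sq_nonneg ‖M 0 j‖, sq_nonneg ‖M 1 j‖]
    exact hdet (Matrix.det_eq_zero_of_column_eq_zero j fun i => by fin_cases i <;> assumption)
  set r : Fin 2 → ℝ := fun i => ‖M i 0‖ ^ 2 + ‖M i 1‖ ^ 2 with hrdef
  set s : Fin 2 → ℝ := fun j => ‖M 0 j‖ ^ 2 + ‖M 1 j‖ ^ 2 with hsdef
  -- `t` is the weight of the conditional distribution `p (· | j)` in the mixture.
  have hcol : ∀ t : ℝ, 0 < t → t < 1 → ∀ j, ((Mᴴ * CFC.log (M * Mᴴ) * M) j j).re ≤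
      ∑ i, ‖M i j‖ ^ 2 * (Real.log (r i) + Real.log (s j) - Real.log t
        - Real.log (‖M i j‖ ^ 2)) := by
    intro t ht0 ht1 j
    have hsj := hs j
    have hq : ∀ i, 0 < t * (‖M i j‖ ^ 2 / s j) + (1 - t) / 2 := by
      intro i
      have h2 : 0 < (1 - t) / 2 := by linarith
      have : 0 ≤ t * (‖M i j‖ ^ 2 / s j) := by positivity
      linarith
    refine (column_log_le M hdet hr (fun i => t * (‖M i j‖ ^ 2 / s j) + (1 - t) / 2) hq ?_ j).trans
      (Finset.sum_le_sum fun i _ => ?_)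
    · have : ‖M 0 j‖ ^ 2 / s j + ‖M 1 j‖ ^ 2 / s j = 1 := by
        rw [← add_div]; exact div_self hsj.ne'
      linear_combination t * this
    · rcases (sq_nonneg ‖M i j‖).eq_or_lt with h0 | h0
      · rw [← h0]; simp
      · refine mul_le_mul_of_nonneg_left ?_ h0.le
        rw [Real.log_div (hr i).ne' (hq i).ne']
        have h1 : Real.log (t * (‖M i j‖ ^ 2 / s j)) ≤
            Real.log (t * (‖M i j‖ ^ 2 / s j) + (1 - t) / 2) :=
          Real.log_le_log (by positivity) (by linarith)
        rw [Real.log_mul ht0.ne' (by positivity), Real.log_div h0.ne' hsj.ne'] at h1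
        change Real.log (r i) - _ ≤ _
        linarith
  have hsum : ∀ t : ℝ, 0 < t → t < 1 →
      r 0 * Real.log (r 0) + r 1 * Real.log (r 1) + s 0 * Real.log (s 0) + s 1 * Real.log (s 1)
        + ∑ i, ∑ j, Real.negMulLog (‖M i j‖ ^ 2) ≥
      -(vnEntropy (M * Mᴴ) * Real.log 2) + (r 0 + r 1) * Real.log t := by
    intro t ht0 ht1
    rw [vnEntropy_eq_neg_trace, neg_neg, Matrix.trace_fin_two, Complex.add_re]
    have h0 := hcol t ht0 ht1 0
    have h1 := hcol t ht0 ht1 1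
    simp only [Fin.sum_univ_two] at h0 h1 ⊢
    simp only [Real.negMulLog]
    simp only [hrdef, hsdef] at h0 h1 ⊢
    linarith
  have hR : 0 < r 0 + r 1 := add_pos (hr 0) (hr 1)
  refine le_of_forall_pos_le_add fun δ hδ => ?_
  have h := hsum (Real.exp (-(δ / (r 0 + r 1)))) (Real.exp_pos _)
    (Real.exp_lt_one_iff.2 (neg_lt_zero.2 (div_pos hδ hR)))
  rw [Real.log_exp] at h
  have h2 : (r 0 + r 1) * -(δ / (r 0 + r 1)) = -δ := by field_simp
  rw [h2] at h
  simp only [Real.negMulLog] at h ⊢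
  simp only [hrdef, hsdef] at h ⊢
  linarith

/-- The Holevo-type bound without invertibility: if `M` is singular, then `‖M i j‖ ^ 2` is a product
distribution, whose mutual information is zero. -/
lemma mutualInfo_le (M : Matrix (Fin 2) (Fin 2) ℂ) (hM : ∑ i, ∑ j, ‖M i j‖ ^ 2 = 1) :
    Real.negMulLog (‖M 0 0‖ ^ 2 + ‖M 0 1‖ ^ 2) + Real.negMulLog (‖M 1 0‖ ^ 2 + ‖M 1 1‖ ^ 2)
      + Real.negMulLog (‖M 0 0‖ ^ 2 + ‖M 1 0‖ ^ 2) + Real.negMulLog (‖M 0 1‖ ^ 2 + ‖M 1 1‖ ^ 2)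
      - ∑ i, ∑ j, Real.negMulLog (‖M i j‖ ^ 2) ≤ vnEntropy (M * Mᴴ) * Real.log 2 := by
  by_cases hdet : M.det = 0
  · have h1 : ‖M 0 0‖ ^ 2 * ‖M 1 1‖ ^ 2 = ‖M 0 1‖ ^ 2 * ‖M 1 0‖ ^ 2 := by
      rw [Matrix.det_fin_two, sub_eq_zero] at hdet
      rw [← mul_pow, ← mul_pow, ← norm_mul, ← norm_mul, hdet]
    have h2 := vnEntropy_nonneg M hM
    have h3 : 0 ≤ vnEntropy (M * Mᴴ) * Real.log 2 := mul_nonneg h2 (Real.log_nonneg (by norm_num))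
    simp only [Fin.sum_univ_two] at hM ⊢
    generalize ‖M 0 0‖ ^ 2 = a at *
    generalize ‖M 0 1‖ ^ 2 = b at *
    generalize ‖M 1 0‖ ^ 2 = c at *
    generalize ‖M 1 1‖ ^ 2 = d at *
    have ea : a = (a + b) * (a + c) := by linear_combination (-a) * hM + h1
    have eb : b = (a + b) * (b + d) := by linear_combination (-b) * hM - h1
    have ec : c = (c + d) * (a + c) := by linear_combination (-c) * hM - h1
    have ed : d = (c + d) * (b + d) := by linear_combination (-d) * hM + h1
    have ha := Real.negMulLog_mul (a + b) (a + c)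
    have hb := Real.negMulLog_mul (a + b) (b + d)
    have hc := Real.negMulLog_mul (c + d) (a + c)
    have hd := Real.negMulLog_mul (c + d) (b + d)
    rw [← ea] at ha
    rw [← eb] at hb
    rw [← ec] at hc
    rw [← ed] at hd
    have h4 : Real.negMulLog a + Real.negMulLog b + (Real.negMulLog c + Real.negMulLog d) =
        Real.negMulLog (a + b) + Real.negMulLog (c + d) + Real.negMulLog (a + c)
          + Real.negMulLog (b + d) := by
      rw [ha, hb, hc, hd]
      linear_combination (Real.negMulLog (a + b) + Real.negMulLog (c + d) + Real.negMulLog (a + c)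
          + Real.negMulLog (b + d)) * hM
    linarith
  · exact mutualInfo_le_of_det_ne_zero M hdet

/-- The upper bound in the main theorem: `H(A B) - 2 H(A ⊕ B) ≤ I(A : B)`, because both `H(A | B)`
and `H(B | A)` are at most the entropy of the parity `A ⊕ B`; then `mutualInfo_le` applies. -/
lemma keyRate_outer_le (M : Matrix (Fin 2) (Fin 2) ℂ) (hM : ∑ i, ∑ j, ‖M i j‖ ^ 2 = 1) :
    keyRate (outer fun i => M i.1 i.2) ≤ vnEntropy (M * Mᴴ) := by
  have hlog : 0 < Real.log 2 := Real.log_pos (by norm_num)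
  rw [keyRate_outer _ (by rw [Fintype.sum_prod_type]; exact hM), div_le_iff₀ hlog,
    Fintype.sum_prod_type]
  have h1 := mutualInfo_le M hM
  simp only [Fin.sum_univ_two] at h1 hM ⊢
  -- Rows of the tables are the values of one qubit, columns the values of the parity.
  have hB := negMulLog_subadditive (sq_nonneg ‖M 0 0‖) (sq_nonneg ‖M 0 1‖) (sq_nonneg ‖M 1 1‖)
    (sq_nonneg ‖M 1 0‖) (by linarith)
  have hA := negMulLog_subadditive (sq_nonneg ‖M 0 0‖) (sq_nonneg ‖M 1 0‖) (sq_nonneg ‖M 1 1‖)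
    (sq_nonneg ‖M 0 1‖) (by linarith)
  rw [add_comm (‖M 1 1‖ ^ 2)] at hA hB
  rw [add_comm (‖M 1 0‖ ^ 2) (‖M 0 1‖ ^ 2)] at hA
  linarith

/-! ### Attainment in the Schmidt basis -/

lemma keyRate_outer_diagonal (M : Matrix (Fin 2) (Fin 2) ℂ) (hM : ∑ i, ∑ j, ‖M i j‖ ^ 2 = 1)
    (h01 : M 0 1 = 0) (h10 : M 1 0 = 0) :
    keyRate (outer fun i => M i.1 i.2) = vnEntropy (M * Mᴴ) := by
  have h : M * Mᴴ = Matrix.diagonal fun i => ((‖M i i‖ ^ 2 : ℝ) : ℂ) := by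
    ext i j
    fin_cases i <;> fin_cases j <;> simp [Matrix.mul_apply, h01, h10, Complex.mul_conj']
  rw [keyRate_outer _ (by rw [Fintype.sum_prod_type]; exact hM), h, vnEntropy_diagonal,
    Fintype.sum_prod_type]
  simp [h01, h10] at hM ⊢
  simp [hM]

/-- The second half of the singular value decomposition: the columns of `W` are the normalized
conjugate of a nonzero row of `N` and a unit vector orthogonal to it. -/
lemma exists_unitary_diag_of_orthogonal_rows (N : Matrix (Fin 2) (Fin 2) ℂ)
    (hN : (N * Nᴴ) 1 0 = 0) (hN' : N ≠ 0) :
    ∃ W ∈ Matrix.unitaryGroup (Fin 2) ℂ, (N * W) 0 1 = 0 ∧ (N * W) 1 0 = 0 := by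
  have key : ∀ a b : ℂ, ¬(a = 0 ∧ b = 0) →
      ∃ n : ℂ, starRingEnd ℂ n = n ∧ n * n * (a * starRingEnd ℂ a + b * starRingEnd ℂ b) = 1 := by
    intro a b hab
    have hpos : 0 < ‖a‖ ^ 2 + ‖b‖ ^ 2 := by
      by_contra hcon
      refine hab ⟨?_, ?_⟩ <;> rw [← norm_eq_zero, ← sq_eq_zero_iff] <;>
        nlinarith [sq_nonneg ‖a‖, sq_nonneg ‖b‖]
    refine ⟨(((√(‖a‖ ^ 2 + ‖b‖ ^ 2))⁻¹ : ℝ) : ℂ), Complex.conj_ofReal _, ?_⟩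
    rw [Complex.mul_conj', Complex.mul_conj']
    norm_cast
    rw [← mul_inv, Real.mul_self_sqrt hpos.le, inv_mul_cancel₀ hpos.ne']
  have horth : N 1 0 * starRingEnd ℂ (N 0 0) + N 1 1 * starRingEnd ℂ (N 0 1) = 0 := by
    simpa [Matrix.mul_apply] using hN
  by_cases h0 : N 0 0 = 0 ∧ N 0 1 = 0
  · have h1 : ¬(N 1 0 = 0 ∧ N 1 1 = 0) := by
      intro h1
      apply hN'
      ext i j
      fin_cases i <;> fin_cases j <;> simp [h0, h1]
    obtain ⟨n, hn, hn1⟩ := key _ _ h1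
    refine ⟨n • !![-N 1 1, starRingEnd ℂ (N 1 0); N 1 0, starRingEnd ℂ (N 1 1)], ?_, ?_, ?_⟩
    · rw [Matrix.mem_unitaryGroup_iff]
      ext i j
      fin_cases i <;> fin_cases j <;> simp [Matrix.mul_apply, hn] <;>
        first | linear_combination hn1 | ring
    · simp [Matrix.mul_apply, h0]
    · simp [Matrix.mul_apply]; ring
  · obtain ⟨n, hn, hn1⟩ := key _ _ h0
    refine ⟨n • !![starRingEnd ℂ (N 0 0), -N 0 1; starRingEnd ℂ (N 0 1), N 0 0], ?_, ?_, ?_⟩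
    · rw [Matrix.mem_unitaryGroup_iff]
      ext i j
      fin_cases i <;> fin_cases j <;> simp [Matrix.mul_apply, hn] <;>
        first | linear_combination hn1 | ring
    · simp [Matrix.mul_apply]; ring
    · simp [Matrix.mul_apply]; linear_combination n * horth

lemma frobenius_eq_trace (M : Matrix (Fin 2) (Fin 2) ℂ) :
    ((∑ i, ∑ j, ‖M i j‖ ^ 2 : ℝ) : ℂ) = (M * Mᴴ).trace := by
  simp [Matrix.trace, Matrix.mul_apply, Complex.mul_conj']

/-- A change of basis on the second qubit does not affect the reduced state of the first. -/
lemma gram_local_unitary {U V : Matrix (Fin 2) (Fin 2) ℂ} (M : Matrix (Fin 2) (Fin 2) ℂ)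
    (hV : V ∈ Matrix.unitaryGroup (Fin 2) ℂ) :
    (U * M * Vᵀ) * (U * M * Vᵀ)ᴴ = U * (M * Mᴴ) * Uᴴ := by
  have h : Vᵀ * (Vᵀ)ᴴ = 1 := by
    rw [Matrix.mem_unitaryGroup_iff', Matrix.star_eq_conjTranspose] at hV
    rw [Matrix.conjTranspose_transpose_eq_transpose_conjTranspose, ← Matrix.transpose_mul,
      hV, Matrix.transpose_one]
  rw [Matrix.conjTranspose_mul, Matrix.mul_assoc, ← Matrix.mul_assoc Vᵀ, h, Matrix.one_mul,
    Matrix.conjTranspose_mul]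
  simp only [Matrix.mul_assoc]

lemma charpoly_unitary_conj {U : Matrix (Fin 2) (Fin 2) ℂ} (A : Matrix (Fin 2) (Fin 2) ℂ)
    (hU : U ∈ Matrix.unitaryGroup (Fin 2) ℂ) : (U * A * Uᴴ).charpoly = A.charpoly := by
  rw [Matrix.mem_unitaryGroup_iff', Matrix.star_eq_conjTranspose] at hU
  rw [Matrix.charpoly_mul_comm, ← Matrix.mul_assoc, hU, Matrix.one_mul]

/-- The supremum is a maximum, attained in the Schmidt basis, where the coefficient matrix
`U * M * Vᵀ` is diagonal. -/
lemma Km_outer (M : Matrix (Fin 2) (Fin 2) ℂ) (hM : ∑ i, ∑ j, ‖M i j‖ ^ 2 = 1) :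
    Km (outer fun i => M i.1 i.2) = vnEntropy (M * Mᴴ) := by
  have hnorm : ∀ U V : Matrix (Fin 2) (Fin 2) ℂ, U ∈ Matrix.unitaryGroup (Fin 2) ℂ →
      V ∈ Matrix.unitaryGroup (Fin 2) ℂ → ∑ i, ∑ j, ‖(U * M * Vᵀ) i j‖ ^ 2 = 1 := by
    intro U V hU hV
    have h := frobenius_eq_trace (U * M * Vᵀ)
    rw [Matrix.mem_unitaryGroup_iff', Matrix.star_eq_conjTranspose] at hU
    rw [gram_local_unitary M hV, Matrix.trace_mul_comm, ← Matrix.mul_assoc, hU, Matrix.one_mul,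
      ← frobenius_eq_trace, hM] at h
    exact_mod_cast h
  have hent : ∀ U V : Matrix (Fin 2) (Fin 2) ℂ, U ∈ Matrix.unitaryGroup (Fin 2) ℂ →
      V ∈ Matrix.unitaryGroup (Fin 2) ℂ →
      vnEntropy ((U * M * Vᵀ) * (U * M * Vᵀ)ᴴ) = vnEntropy (M * Mᴴ) := by
    intro U V hU hV
    refine vnEntropy_congr (Matrix.isHermitian_mul_conjTranspose_self _)
      (Matrix.isHermitian_mul_conjTranspose_self _) ?_
    rw [gram_local_unitary M hV, charpoly_unitary_conj _ hU]
  refine IsGreatest.csSup_eq ⟨?_, ?_⟩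
  · have h := Matrix.isHermitian_mul_conjTranspose_self M
    set U : Matrix (Fin 2) (Fin 2) ℂ := star (h.eigenvectorUnitary : Matrix (Fin 2) (Fin 2) ℂ)
      with hUdef
    have hU : U ∈ Matrix.unitaryGroup (Fin 2) ℂ :=
      (star h.eigenvectorUnitary : Matrix.unitaryGroup (Fin 2) ℂ).2
    have hdiag : (U * M) * (U * M)ᴴ = Matrix.diagonal fun i => (h.eigenvalues i : ℂ) := by
      have h1 := h.conjStarAlgAut_star_eigenvectorUnitary
      rw [Unitary.conjStarAlgAut_star_apply] at h1
      rw [Matrix.conjTranspose_mul, Matrix.mul_assoc, ← Matrix.mul_assoc M, ← Matrix.mul_assoc]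
      have h2 : Uᴴ = (h.eigenvectorUnitary : Matrix (Fin 2) (Fin 2) ℂ) := star_star _
      rw [h2]
      exact h1
    have hne : U * M ≠ 0 := by
      intro h0
      have h1 := hnorm U 1 hU (one_mem _)
      simp [h0] at h1
    obtain ⟨W, hW, h01, h10⟩ :=
      exists_unitary_diag_of_orthogonal_rows (U * M) (by rw [hdiag]; simp) hne
    have hWt : Wᵀ ∈ Matrix.unitaryGroup (Fin 2) ℂ := by
      rw [Matrix.mem_unitaryGroup_iff, Matrix.star_eq_conjTranspose] at hW
      rw [Matrix.mem_unitaryGroup_iff', Matrix.star_eq_conjTranspose,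
        Matrix.conjTranspose_transpose_eq_transpose_conjTranspose, ← Matrix.transpose_mul, hW,
        Matrix.transpose_one]
    refine ⟨U, Wᵀ, hU, hWt, ?_⟩
    rw [local_conj_outer, keyRate_outer_diagonal _ (hnorm U _ hU hWt), hent U _ hU hWt]
    · rwa [Matrix.transpose_transpose]
    · rwa [Matrix.transpose_transpose]
  · rintro x ⟨U, V, hU, hV, rfl⟩
    rw [local_conj_outer, ← hent U V hU hV]
    exact keyRate_outer_le _ (hnorm U V hU hV)

lemma vnEntropy_eq_zero_of_det_eq_zero (M : Matrix (Fin 2) (Fin 2) ℂ)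
    (hM : ∑ i, ∑ j, ‖M i j‖ ^ 2 = 1) (hdet : M.det = 0) : vnEntropy (M * Mᴴ) = 0 := by
  have hc : (M * Mᴴ).charpoly =
      (Matrix.diagonal fun i => ((![0, 1] : Fin 2 → ℝ) i : ℂ)).charpoly := by
    rw [Matrix.charpoly_fin_two, ← frobenius_eq_trace, hM, Matrix.det_mul, hdet,
      Matrix.charpoly_diagonal]
    simp
    ring
  rw [vnEntropy_congr (Matrix.isHermitian_mul_conjTranspose_self M) ?_ hc, vnEntropy_diagonal]
  · simp
  · rw [Matrix.isHermitian_diagonal_iff]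
    intro i
    simp [isSelfAdjoint_iff]

/-- for a pure state, the basis-optimized key rate equals the
entanglement entropy; in particular it vanishes on product states. -/
theorem stmt_15 (ψ : Q2 → ℂ) (hψ : ∑ i, ‖ψ i‖^2 = 1) :
    Km (outer ψ) = vnEntropy (trB (outer ψ)) ∧
    (∀ φA φB : Fin 2 → ℂ, (ψ = fun i => φA i.1 * φB i.2) → Km (outer ψ) = 0) := by
  have hM : ∑ i, ∑ j, ‖(Matrix.of fun i j => ψ (i, j)) i j‖ ^ 2 = 1 := by
    rw [Fintype.sum_prod_type] at hψ
    exact hψ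
  have hK := Km_outer _ hM
  refine ⟨hK.trans (congrArg vnEntropy (trB_outer _)).symm, ?_⟩
  rintro φA φB rfl
  refine hK.trans (vnEntropy_eq_zero_of_det_eq_zero _ hM ?_)
  rw [Matrix.det_fin_two]
  simp
  ring

end
end
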